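/- arXiv:2310.16228 — 10 statements merged into one kernel-verified Lean document; each statement's English description precedes it below -/
import Mathlib

section
/- Let v = (a₁μ₁, a₂μ₂) ∈ ℝ² with v ≠ 0, let p = ½·δ_v + ½·δ_{−v}, and let k be the approximate ReLU kernel with a* = 815/3072. Define φ₁(x) := (‖x‖ / (2‖v‖)) · (1 + ⟨x/‖x‖, v/‖v‖⟩²). Then φ₁ is a normalized eigenfunction of the kernel operator with eigenvalue 2·a*·‖v‖²: for every x ∈ ℝ², ∫ k(x, z) · φ₁(z) dp(z) = 2·a*·‖v‖² · φ₁(x), and moreover ∫ φ₁(z)² dp(z) = 1. -/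
open MeasureTheory RealInnerProductSpace
open scoped ENNReal

/-- **First eigenfunction of the approximate ReLU kernel.** With
`v = (a₁μ₁, a₂μ₂) ≠ 0`, `p = ½·δ_v + ½·δ_{-v}`, `a* = 815/3072` and
`k(x,z) = a*‖x‖‖z‖(1 + ⟨x/‖x‖, z/‖z‖⟩)²` (with `x/‖x‖ := 0` for `x = 0`),
`φ₁(x) = (‖x‖/(2‖v‖))(1 + ⟨x/‖x‖, v/‖v‖⟩²)` is a normalized eigenfunction
with eigenvalue `2·a*·‖v‖²`. -/
theorem relu_kernel_eigenfunction_one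
    (a₁ a₂ μ₁ μ₂ : ℝ) (ha₁ : 0 < a₁) (ha₂ : 0 < a₂)
    (v : EuclideanSpace ℝ (Fin 2))
    (hv : v = (WithLp.equiv 2 (Fin 2 → ℝ)).symm ![a₁ * μ₁, a₂ * μ₂])
    (hvne : v ≠ 0)
    (p : Measure (EuclideanSpace ℝ (Fin 2)))
    (hp : p = (1/2 : ℝ≥0∞) • Measure.dirac v + (1/2 : ℝ≥0∞) • Measure.dirac (-v))
    (k : EuclideanSpace ℝ (Fin 2) → EuclideanSpace ℝ (Fin 2) → ℝ)
    (hk : ∀ x z, k x z =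
      (815/3072 : ℝ) * ‖x‖ * ‖z‖ * (1 + ⟪‖x‖⁻¹ • x, ‖z‖⁻¹ • z⟫) ^ 2)
    (φ₁ : EuclideanSpace ℝ (Fin 2) → ℝ)
    (hφ₁ : ∀ x, φ₁ x = (‖x‖ / (2 * ‖v‖)) * (1 + ⟪‖x‖⁻¹ • x, ‖v‖⁻¹ • v⟫ ^ 2)) :
    (∀ x, ∫ z, k x z * φ₁ z ∂p = 2 * (815/3072 : ℝ) * ‖v‖ ^ 2 * φ₁ x) ∧
      (∫ z, (φ₁ z) ^ 2 ∂p) = 1 := by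
  have hn : ‖v‖ ≠ 0 := norm_ne_zero_iff.mpr hvne
  have hint : ∀ f : EuclideanSpace ℝ (Fin 2) → ℝ,
      ∫ z, f z ∂p = (1/2) * f v + (1/2) * f (-v) := by
    intro f
    have h : ∀ w : EuclideanSpace ℝ (Fin 2),
        Integrable f ((1/2 : ℝ≥0∞) • Measure.dirac w) := by
      intro w
      refine Integrable.smul_measure ?_ (by simp)
      exact integrable_dirac (by simp)
    rw [hp, integral_add_measure (h v) (h (-v)), integral_smul_measure, integral_smul_measure,
      integral_dirac, integral_dirac]
    simp
  have hu : (⟪‖v‖⁻¹ • v, ‖v‖⁻¹ • v⟫ : ℝ) = 1 := by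
    rw [real_inner_smul_left, real_inner_smul_right, real_inner_self_eq_norm_sq]
    field_simp
  have h1 : φ₁ v = 1 := by
    rw [hφ₁, hu]; field_simp; norm_num
  have h2 : φ₁ (-v) = 1 := by
    rw [hφ₁, norm_neg, smul_neg, inner_neg_left, hu]; field_simp; norm_num
  refine ⟨fun x => ?_, ?_⟩
  · rw [hint, h1, h2, hk, hk, hφ₁, norm_neg, smul_neg, inner_neg_right]
    field_simp
    ring
  · rw [hint, h1, h2]; norm_num
end

section
/- Let v = (a₁μ₁, a₂μ₂) ∈ ℝ² with v ≠ 0, let p = ½·δ_v + ½·δ_{−v}, and let k be the approximate ReLU kernel with a* = 815/3072. Define φ₂(x) := ⟨x, v⟩ / ‖v‖². Then φ₂ is a normalized eigenfunction of the kernel operator with eigenvalue 2·a*·‖v‖²: for every x ∈ ℝ², ∫ k(x, z) · φ₂(z) dp(z) = 2·a*·‖v‖² · φ₂(x), and moreover ∫ φ₂(z)² dp(z) = 1. -/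
open MeasureTheory RealInnerProductSpace
open scoped ENNReal

/-- **Second eigenfunction of the approximate ReLU kernel.** With
`v = (a₁μ₁, a₂μ₂) ≠ 0`, `p = ½·δ_v + ½·δ_{-v}`, `a* = 815/3072` and
`k(x,z) = a*‖x‖‖z‖(1 + ⟨x/‖x‖, z/‖z‖⟩)²` (with `x/‖x‖ := 0` for `x = 0`),
`φ₂(x) = ⟨x, v⟩/‖v‖²` is a normalized eigenfunction with eigenvalue
`2·a*·‖v‖²`. -/
theorem relu_kernel_eigenfunction_two
    (a₁ a₂ μ₁ μ₂ : ℝ) (ha₁ : 0 < a₁) (ha₂ : 0 < a₂)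
    (v : EuclideanSpace ℝ (Fin 2))
    (hv : v = (WithLp.equiv 2 (Fin 2 → ℝ)).symm ![a₁ * μ₁, a₂ * μ₂])
    (hvne : v ≠ 0)
    (p : Measure (EuclideanSpace ℝ (Fin 2)))
    (hp : p = (1/2 : ℝ≥0∞) • Measure.dirac v + (1/2 : ℝ≥0∞) • Measure.dirac (-v))
    (k : EuclideanSpace ℝ (Fin 2) → EuclideanSpace ℝ (Fin 2) → ℝ)
    (hk : ∀ x z, k x z =
      (815/3072 : ℝ) * ‖x‖ * ‖z‖ * (1 + ⟪‖x‖⁻¹ • x, ‖z‖⁻¹ • z⟫) ^ 2)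
    (φ₂ : EuclideanSpace ℝ (Fin 2) → ℝ)
    (hφ₂ : ∀ x, φ₂ x = ⟪x, v⟫ / ‖v‖ ^ 2) :
    (∀ x, ∫ z, k x z * φ₂ z ∂p = 2 * (815/3072 : ℝ) * ‖v‖ ^ 2 * φ₂ x) ∧
      (∫ z, (φ₂ z) ^ 2 ∂p) = 1 := by
  have hint : ∀ f : EuclideanSpace ℝ (Fin 2) → ℝ,
      ∫ z, f z ∂p = 1 / 2 * f v + 1 / 2 * f (-v) := by
    intro f
    have hi : ∀ w : EuclideanSpace ℝ (Fin 2),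
        Integrable f ((1/2 : ℝ≥0∞) • Measure.dirac w) := fun w =>
      (integrable_dirac (by simp)).smul_measure (by simp)
    rw [hp, integral_add_measure (hi v) (hi (-v)), integral_smul_measure,
      integral_smul_measure, integral_dirac, integral_dirac]
    simp
  have hn : ‖v‖ ≠ 0 := norm_ne_zero_iff.mpr hvne
  have h1 : φ₂ v = 1 := by
    rw [hφ₂, real_inner_self_eq_norm_sq]
    field_simp
  have h2 : φ₂ (-v) = -1 := by
    rw [hφ₂, inner_neg_left, real_inner_self_eq_norm_sq]
    field_simp
  constructor
  · intro x
    rw [hint, h1, h2, hk, hk, hφ₂, norm_neg, smul_neg, inner_neg_right,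
      real_inner_smul_left, real_inner_smul_right]
    by_cases hx : x = 0
    · simp [hx]
    · have hxn : ‖x‖ ≠ 0 := norm_ne_zero_iff.mpr hx
      field_simp
      ring
  · rw [hint, h1, h2]
    norm_num
end

section
/- Let v = (a₁μ₁, a₂μ₂) ∈ ℝ² with v ≠ 0, let p = ½·δ_v + ½·δ_{−v}, and let k be the approximate ReLU kernel with a* = 815/3072. Suppose λ ≠ 0 and φ : ℝ² → ℝ is not identically zero and satisfies, for every x ∈ ℝ², ∫ k(x, z) · φ(z) dp(z) = λ · φ(x). Then λ = 2·a*·‖v‖². In particular the approximate ReLU kernel operator under p has no nonzero eigenvalue other than 2·a*·‖v‖². -/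
open MeasureTheory RealInnerProductSpace
open scoped ENNReal

/-- **Uniqueness of the nonzero eigenvalue of the approximate ReLU kernel.**
With `v = (a₁μ₁, a₂μ₂) ≠ 0`, `p = ½·δ_v + ½·δ_{-v}`, `a* = 815/3072` and
`k(x,z) = a*‖x‖‖z‖(1 + ⟨x/‖x‖, z/‖z‖⟩)²` (with `x/‖x‖ := 0` for `x = 0`),
any nonzero eigenvalue of the kernel operator equals `2·a*·‖v‖²`. -/
theorem relu_kernel_unique_eigenvalue
    (a₁ a₂ μ₁ μ₂ : ℝ) (ha₁ : 0 < a₁) (ha₂ : 0 < a₂)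
    (v : EuclideanSpace ℝ (Fin 2))
    (hv : v = (WithLp.equiv 2 (Fin 2 → ℝ)).symm ![a₁ * μ₁, a₂ * μ₂])
    (hvne : v ≠ 0)
    (p : Measure (EuclideanSpace ℝ (Fin 2)))
    (hp : p = (1/2 : ℝ≥0∞) • Measure.dirac v + (1/2 : ℝ≥0∞) • Measure.dirac (-v))
    (k : EuclideanSpace ℝ (Fin 2) → EuclideanSpace ℝ (Fin 2) → ℝ)
    (hk : ∀ x z, k x z =
      (815/3072 : ℝ) * ‖x‖ * ‖z‖ * (1 + ⟪‖x‖⁻¹ • x, ‖z‖⁻¹ • z⟫) ^ 2)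
    (lam : ℝ) (hlam : lam ≠ 0)
    (φ : EuclideanSpace ℝ (Fin 2) → ℝ)
    (hφne : ∃ x, φ x ≠ 0)
    (heig : ∀ x, ∫ z, k x z * φ z ∂p = lam * φ x) :
    lam = 2 * (815/3072 : ℝ) * ‖v‖ ^ 2 := by
  have hint : ∀ f : EuclideanSpace ℝ (Fin 2) → ℝ,
      ∫ z, f z ∂p = (1/2) * f v + (1/2) * f (-v) := by
    intro f
    have h1 : ∀ w, Integrable f ((1/2 : ℝ≥0∞) • Measure.dirac w) := fun w =>
      (integrable_dirac (by simp)).smul_measure (by simp)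
    rw [hp, integral_add_measure (h1 _) (h1 _), integral_smul_measure, integral_smul_measure,
      integral_dirac, integral_dirac]
    simp
  have hn : ‖v‖ ≠ 0 := norm_ne_zero_iff.mpr hvne
  have hin : ⟪‖v‖⁻¹ • v, ‖v‖⁻¹ • v⟫ = (1 : ℝ) := by
    rw [real_inner_smul_left, real_inner_smul_right, real_inner_self_eq_norm_sq]
    field_simp
  have kvv : k v v = 4 * (815/3072 : ℝ) * ‖v‖ ^ 2 := by
    rw [hk, hin]; ring
  have knn : k (-v) (-v) = 4 * (815/3072 : ℝ) * ‖v‖ ^ 2 := by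
    rw [hk, norm_neg, smul_neg, inner_neg_neg, hin]; ring
  have kvn : k v (-v) = 0 := by
    rw [hk, norm_neg, smul_neg, inner_neg_right, hin]; ring
  have knv : k (-v) v = 0 := by
    rw [hk, norm_neg, smul_neg, inner_neg_left, hin]; ring
  have e1 := heig v
  have e2 := heig (-v)
  rw [hint, kvv, kvn] at e1
  rw [hint, knv, knn] at e2
  by_cases h1 : φ v = 0
  · by_cases h2 : φ (-v) = 0
    · obtain ⟨x, hx⟩ := hφne
      have e := heig x
      rw [hint, h1, h2] at e
      have : lam * φ x = 0 := by rw [← e]; ring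
      exact absurd this (mul_ne_zero hlam hx)
    · apply mul_right_cancel₀ h2
      rw [← e2]; ring
  · apply mul_right_cancel₀ h1
    rw [← e1]; ring
end

section
/- Let h(u) := (1/π)·(u·(π − arccos(u)) + √(1 − u²)). Then for every a ∈ ℝ, ∫_{−1}^{1} (h(u) − a·(1+u)²)² du = 1/3 − (163/48)·a + (32/5)·a² + 32/(27·π²). -/
/-- **Closed form of the quadratic-approximation error.** For the arc-cosine
kernel profile `h(u) = (1/π)(u(π − arccos u) + √(1 − u²))` and any `a ∈ ℝ`,
`∫_{−1}^{1} (h(u) − a(1+u)²)² du = 1/3 − (163/48)a + (32/5)a² + 32/(27π²)`. -/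
theorem relu_profile_quadratic_error
    (h : ℝ → ℝ)
    (hh : ∀ u, h u = (1 / Real.pi) *
      (u * (Real.pi - Real.arccos u) + Real.sqrt (1 - u ^ 2)))
    (a : ℝ) :
    (∫ u in (-1 : ℝ)..1, (h u - a * (1 + u) ^ 2) ^ 2) =
      1/3 - (163/48) * a + (32/5) * a ^ 2 + 32 / (27 * Real.pi ^ 2) := by
  have hpi : Real.pi ≠ 0 := Real.pi_ne_zero
  simp only [hh]
  let A : ℝ → ℝ := fun u => Real.pi - Real.arccos u
  let s : ℝ → ℝ := fun u => Real.sqrt (1 - u ^ 2)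
  have hAc : Continuous A := continuous_const.sub Real.continuous_arccos
  have hsc : Continuous s := by fun_prop
  -- explicit antiderivative
  let F : ℝ → ℝ := fun u =>
    (1 / Real.pi ^ 2) * ((A u) ^ 2 * (u ^ 3 / 3) + A u * s u * (8 / 9 * u ^ 2 - 2 / 9)
        + (11 / 9 * u - 17 / 27 * u ^ 3))
      - (2 * a / Real.pi) * (A u * (u ^ 2 / 2 + 2 / 3 * u ^ 3 + u ^ 4 / 4 + 9 / 32)
        + s u * (5 / 16 * u ^ 3 + 8 / 9 * u ^ 2 + 23 / 32 * u - 2 / 9))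
      + a ^ 2 * ((1 + u) ^ 5 / 5)
  have key := intervalIntegral.integral_eq_sub_of_hasDerivAt_of_le (a := (-1 : ℝ)) (b := 1)
    (f := F) (f' := fun u => ((1 / Real.pi) * (u * A u + s u) - a * (1 + u) ^ 2) ^ 2)
    (by norm_num) (by fun_prop) ?_ (Continuous.intervalIntegrable (by fun_prop) _ _)
  · change (∫ u in (-1 : ℝ)..1, ((1 / Real.pi) * (u * A u + s u) - a * (1 + u) ^ 2) ^ 2) = _
    rw [key]
    simp only [F, A, s, Real.arccos_one, Real.arccos_neg_one]
    norm_num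
    field_simp
    ring
  · rintro u ⟨h1, h2⟩
    have hpos : 0 < 1 - u ^ 2 := by nlinarith
    have hs0 : s u ≠ 0 := (Real.sqrt_pos.mpr hpos).ne'
    have hs2 : s u ^ 2 = 1 - u ^ 2 := Real.sq_sqrt hpos.le
    have hA : HasDerivAt A (1 / s u) u := by
      have := (Real.hasDerivAt_arccos h1.ne' h2.ne).const_sub Real.pi
      simpa [A, s] using this
    have hs : HasDerivAt s (-u / s u) u := by
      have := (((hasDerivAt_id' u).pow 2).const_sub 1).sqrt hpos.ne'
      refine HasDerivAt.congr_deriv this ?_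
      change -(((2 : ℕ) : ℝ) * u ^ (2 - 1) * 1) / (2 * s u) = -u / s u
      field_simp
      norm_num
    have hx := hasDerivAt_id' u
    have hq1 : HasDerivAt (fun u : ℝ => 8 / 9 * u ^ 2 - 2 / 9) (16 / 9 * u) u := by
      refine HasDerivAt.congr_deriv (((hx.pow 2).const_mul (8 / 9)).sub_const (2 / 9)) ?_
      norm_num <;> ring
    have hp1 : HasDerivAt (fun u : ℝ => u ^ 3 / 3) (u ^ 2) u := by
      refine HasDerivAt.congr_deriv ((hx.pow 3).div_const 3) ?_
      norm_num <;> ring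
    have hr1 : HasDerivAt (fun u : ℝ => 11 / 9 * u - 17 / 27 * u ^ 3)
        (11 / 9 - 17 / 9 * u ^ 2) u := by
      refine HasDerivAt.congr_deriv ((hx.const_mul (11 / 9)).sub ((hx.pow 3).const_mul (17 / 27))) ?_
      norm_num <;> ring
    have hp2 : HasDerivAt (fun u : ℝ => u ^ 2 / 2 + 2 / 3 * u ^ 3 + u ^ 4 / 4 + 9 / 32)
        (u + 2 * u ^ 2 + u ^ 3) u := by
      refine HasDerivAt.congr_deriv (((((hx.pow 2).div_const 2).add ((hx.pow 3).const_mul (2 / 3))).add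
        ((hx.pow 4).div_const 4)).add_const (9 / 32)) ?_
      norm_num <;> ring
    have hq2 : HasDerivAt (fun u : ℝ => 5 / 16 * u ^ 3 + 8 / 9 * u ^ 2 + 23 / 32 * u - 2 / 9)
        (15 / 16 * u ^ 2 + 16 / 9 * u + 23 / 32) u := by
      refine HasDerivAt.congr_deriv (((((hx.pow 3).const_mul (5 / 16)).add ((hx.pow 2).const_mul (8 / 9))).add
        (hx.const_mul (23 / 32))).sub_const (2 / 9)) ?_
      norm_num <;> ring
    have hp3 : HasDerivAt (fun u : ℝ => (1 + u) ^ 5 / 5) ((1 + u) ^ 4) u := by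
      refine HasDerivAt.congr_deriv (((hx.const_add 1).pow 5).div_const 5) ?_
      norm_num <;> ring
    have hF := ((((((hA.pow 2).mul hp1).add ((hA.mul hs).mul hq1)).add hr1).const_mul
      (1 / Real.pi ^ 2)).sub (((hA.mul hp2).add (hs.mul hq2)).const_mul
      (2 * a / Real.pi))).add (hp3.const_mul (a ^ 2))
    refine HasDerivAt.congr_deriv hF ?_
    simp only [Pi.mul_apply, Pi.pow_apply]
    generalize s u = S at *
    generalize A u = B at *
    field_simp
    norm_num
    have hS3 : S ^ 3 = S * (1 - u ^ 2) := by rw [← hs2]; ring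
    ring_nf
    simp only [hs2, hS3]
    ring
end

section
/- Let h(u) := (1/π)·(u·(π − arccos(u)) + √(1 − u²)) and for a ∈ ℝ let e_a := ∫_{−1}^{1} (h(u) − a·(1+u)²)² du. Then a ↦ e_a has a unique minimizer at a* = 815/3072; that is, for every a ≠ 815/3072 one has e_{815/3072} < e_a. -/
lemma relu_key : ∫ u in (-1 : ℝ)..1,
    (u * (Real.pi - Real.arccos u) + Real.sqrt (1 - u ^ 2)) * (1 + u) ^ 2
      = 163 / 96 * Real.pi := by
  have := intervalIntegral.integral_eq_sub_of_hasDerivAt_of_le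
    (a := -1) (b := 1)
    (f := fun u : ℝ => (u ^ 2 / 2 + 2 * u ^ 3 / 3 + u ^ 4 / 4 + 9 / 32)
      * (Real.pi - Real.arccos u)
      + (-2 / 9 + 23 / 32 * u + 8 / 9 * u ^ 2 + 5 / 16 * u ^ 3) * Real.sqrt (1 - u ^ 2))
    (f' := fun u : ℝ =>
      (u * (Real.pi - Real.arccos u) + Real.sqrt (1 - u ^ 2)) * (1 + u) ^ 2)
    (by norm_num)
    (by
      have := Real.continuous_arccos
      exact Continuous.continuousOn (by fun_prop))
    (by
      intro u hu
      have hpos : 0 < 1 - u ^ 2 := by nlinarith [hu.1, hu.2]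
      have hs : 0 < Real.sqrt (1 - u ^ 2) := Real.sqrt_pos.2 hpos
      have hsq : Real.sqrt (1 - u ^ 2) ^ 2 = 1 - u ^ 2 := Real.sq_sqrt hpos.le
      have hA := (Real.hasDerivAt_arccos (x := u) (ne_of_gt hu.1) (ne_of_lt hu.2)).const_sub Real.pi
      have hi := hasDerivAt_id' u
      have hS := (((hi.pow 2).const_sub 1)).sqrt hpos.ne'
      have hP : HasDerivAt (fun u : ℝ => u ^ 2 / 2 + 2 * u ^ 3 / 3 + u ^ 4 / 4 + 9 / 32)
          (u * (1 + u) ^ 2) u := by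
        refine ((((((hi.pow 2).div_const 2).add (((hi.pow 3).const_mul 2).div_const 3)).add
          ((hi.pow 4).div_const 4))).add_const (9 / 32)).congr_deriv ?_
        norm_num
        ring
      have hQ : HasDerivAt (fun u : ℝ => -2 / 9 + 23 / 32 * u + 8 / 9 * u ^ 2 + 5 / 16 * u ^ 3)
          (23 / 32 + 16 / 9 * u + 15 / 16 * u ^ 2) u := by
        refine ((((hi.const_mul (23 / 32)).const_add (-2 / 9)).add
          ((hi.pow 2).const_mul (8 / 9))).add ((hi.pow 3).const_mul (5 / 16))).congr_deriv ?_
        norm_num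
        ring
      refine ((hP.mul hA).add (hQ.mul hS)).congr_deriv ?_
      simp only [Pi.pow_apply]
      generalize Real.sqrt (1 - u ^ 2) = s at *
      field_simp
      norm_num
      ring_nf
      ring_nf at hsq
      simp only [hsq]
      ring)
    (by
      have := Real.continuous_arccos
      exact Continuous.intervalIntegrable (by fun_prop) _ _)
  rw [this]
  norm_num
  try ring

/-- **Optimal quadratic approximation coefficient.** For the arc-cosine kernel
profile `h(u) = (1/π)(u(π − arccos u) + √(1 − u²))`, the squared `L²` error
`e a = ∫_{−1}^{1} (h(u) − a(1+u)²)² du` has the unique minimizer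
`a* = 815/3072`: for every `a ≠ 815/3072`, `e (815/3072) < e a`. -/
theorem relu_profile_optimal_coefficient
    (h : ℝ → ℝ)
    (hh : ∀ u, h u = (1 / Real.pi) *
      (u * (Real.pi - Real.arccos u) + Real.sqrt (1 - u ^ 2)))
    (e : ℝ → ℝ)
    (he : ∀ a, e a = ∫ u in (-1 : ℝ)..1, (h u - a * (1 + u) ^ 2) ^ 2) :
    ∀ a : ℝ, a ≠ 815/3072 → e (815/3072) < e a := by
  have hc : Continuous h := by
    have := Real.continuous_arccos
    rw [funext hh]
    fun_prop
  have h1 : ∫ u in (-1 : ℝ)..1, h u * (1 + u) ^ 2 = 163 / 96 := by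
    simp only [hh, mul_assoc (1 / Real.pi)]
    rw [intervalIntegral.integral_const_mul, relu_key]
    have := Real.pi_ne_zero
    field_simp
  have h2 : ∫ u in (-1 : ℝ)..1, (1 + u) ^ 4 = 32 / 5 := by
    rw [intervalIntegral.integral_comp_add_left (fun x : ℝ => x ^ 4) 1, integral_pow]
    norm_num
  have key : ∀ a, e a = (∫ u in (-1 : ℝ)..1, h u ^ 2) - 2 * a * (163 / 96) + a ^ 2 * (32 / 5) := by
    intro a
    rw [he, ← h1, ← h2, ← intervalIntegral.integral_const_mul,
      ← intervalIntegral.integral_const_mul, ← intervalIntegral.integral_sub,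
      ← intervalIntegral.integral_add]
    · congr 1
      ext u
      ring
    all_goals exact Continuous.intervalIntegrable (by fun_prop) _ _
  intro a ha
  rw [key, key]
  have : 0 < (a - 815 / 3072) ^ 2 := by
    have := sub_ne_zero.2 ha
    positivity
  nlinarith
end

section
/- For every u ∈ (−1, 1) and every a ∈ ℝ, the function E_a(u) := (1/(2160π²)) · [432π²a²u⁵ + 80(9π²(6a² − 4a + 1) − 17)u³ + 240(9π²a² + 11)u + 1080π²a(2a − 1)u⁴ + 2160π²a(2a − 1)u² − 15π√(1 − u²)(a(90u³ + 256u² + 207u − 64) − 128u² + 32) + 120(3πa(3u² + 8u + 6)u² − 12πu³ + 4(1 − 4u²)√(1 − u²))·arccos(u) − 1215πa·arcsin(u) + 720u³·arccos(u)²] is differentiable at u with derivative equal to (h(u) − a(1+u)²)², where h(u) = (1/π)·(u·(π − arccos(u)) + √(1 − u²)). -/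
/-- **Antiderivative of the squared approximation error.** For every `a ∈ ℝ`
and every `u ∈ (−1, 1)`, the function `E_a` below is differentiable at `u`
with derivative `(h(u) − a(1+u)²)²`, where
`h(u) = (1/π)(u(π − arccos u) + √(1 − u²))`. -/
theorem relu_profile_error_antiderivative
    (h : ℝ → ℝ)
    (hh : ∀ u, h u = (1 / Real.pi) *
      (u * (Real.pi - Real.arccos u) + Real.sqrt (1 - u ^ 2)))
    (E : ℝ → ℝ → ℝ)
    (hE : ∀ a u, E a u = (1 / (2160 * Real.pi ^ 2)) *
      (432 * Real.pi ^ 2 * a ^ 2 * u ^ 5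
        + 80 * (9 * Real.pi ^ 2 * (6 * a ^ 2 - 4 * a + 1) - 17) * u ^ 3
        + 240 * (9 * Real.pi ^ 2 * a ^ 2 + 11) * u
        + 1080 * Real.pi ^ 2 * a * (2 * a - 1) * u ^ 4
        + 2160 * Real.pi ^ 2 * a * (2 * a - 1) * u ^ 2
        - 15 * Real.pi * Real.sqrt (1 - u ^ 2) *
            (a * (90 * u ^ 3 + 256 * u ^ 2 + 207 * u - 64) - 128 * u ^ 2 + 32)
        + 120 * (3 * Real.pi * a * (3 * u ^ 2 + 8 * u + 6) * u ^ 2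
            - 12 * Real.pi * u ^ 3
            + 4 * (1 - 4 * u ^ 2) * Real.sqrt (1 - u ^ 2)) * Real.arccos u
        - 1215 * Real.pi * a * Real.arcsin u
        + 720 * u ^ 3 * Real.arccos u ^ 2)) :
    ∀ a : ℝ, ∀ u ∈ Set.Ioo (-1 : ℝ) 1,
      HasDerivAt (E a) ((h u - a * (1 + u) ^ 2) ^ 2) u := by
  intro a u hu
  obtain ⟨hu1, hu2⟩ := hu
  have hpos : 0 < 1 - u ^ 2 := by nlinarith
  have hs2 : Real.sqrt (1 - u ^ 2) ^ 2 = 1 - u ^ 2 := Real.sq_sqrt hpos.le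
  have hs0 : Real.sqrt (1 - u ^ 2) ≠ 0 := (Real.sqrt_pos.mpr hpos).ne'
  have hp0 : Real.pi ≠ 0 := Real.pi_ne_zero
  have dc := Real.hasDerivAt_arccos (x := u) (by linarith) (by linarith)
  have da := Real.hasDerivAt_arcsin (x := u) (by linarith) (by linarith)
  have di := hasDerivAt_id' u
  have ds := ((di.fun_pow 2).const_sub 1).sqrt hpos.ne'
  have d2 := di.fun_pow 2
  have d3 := di.fun_pow 3
  have d4 := di.fun_pow 4
  have d5 := di.fun_pow 5
  have hEa : E a = fun u => _ := funext (hE a)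
  rw [hEa]
  have t1 := d5.const_mul (432 * Real.pi ^ 2 * a ^ 2)
  have t2 := d3.const_mul (80 * (9 * Real.pi ^ 2 * (6 * a ^ 2 - 4 * a + 1) - 17))
  have t3 := di.const_mul (240 * (9 * Real.pi ^ 2 * a ^ 2 + 11))
  have t4 := d4.const_mul (1080 * Real.pi ^ 2 * a * (2 * a - 1))
  have t5 := d2.const_mul (2160 * Real.pi ^ 2 * a * (2 * a - 1))
  have t6 := (ds.const_mul (15 * Real.pi)).fun_mul
    (((((((d3.const_mul 90).fun_add (d2.const_mul 256)).fun_add (di.const_mul 207)).sub_const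
      64).const_mul a).fun_sub (d2.const_mul 128)).add_const 32)
  have t7 := (((((((((d2.const_mul 3).fun_add (di.const_mul 8)).add_const 6).const_mul
      (3 * Real.pi * a)).fun_mul d2).fun_sub (d3.const_mul (12 * Real.pi))).fun_add
      ((((d2.const_mul 4).const_sub 1).const_mul 4).fun_mul ds)).const_mul 120).fun_mul dc)
  have t8 := da.const_mul (1215 * Real.pi * a)
  have t9 := (d3.const_mul 720).fun_mul (dc.fun_pow 2)
  have T := (((((((((t1.fun_add t2).fun_add t3).fun_add t4).fun_add t5).fun_sub t6).fun_add
    t7).fun_sub t8).fun_add t9).const_mul (1 / (2160 * Real.pi ^ 2)))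
  refine T.congr_deriv ?_
  rw [hh]
  clear T t1 t2 t3 t4 t5 t6 t7 t8 t9 hEa hE hh d2 d3 d4 d5 ds di da dc
  generalize Real.sqrt (1 - u ^ 2) = s at *
  generalize Real.arccos u = c at *
  generalize Real.arcsin u = r at *
  generalize Real.pi = p at *
  have hu2' : u ^ 2 = 1 - s ^ 2 := by linarith
  have hu3 : u ^ 3 = u * (1 - s ^ 2) := by rw [← hu2']; ring
  have hu4 : u ^ 4 = (1 - s ^ 2) ^ 2 := by rw [← hu2']; ring
  have hu5 : u ^ 5 = u * (1 - s ^ 2) ^ 2 := by rw [← hu2']; ring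
  have hu6 : u ^ 6 = (1 - s ^ 2) ^ 3 := by rw [← hu2']; ring
  push_cast
  field_simp
  ring_nf
  simp only [hu2', hu3, hu4, hu5, hu6]
  ring
end

section
/- Let v = (a₁μ₁, a₂μ₂) ∈ ℝ² with v ≠ 0 and p = ½·δ_v + ½·δ_{−v}. Define φ(x) := ⟨v, x⟩/‖v‖², f(x) := ½·φ(x)·φ(v), and for b = (b₁, b₂) ∈ ℝ² let B·v := (b₁a₁μ₁, b₂a₂μ₂) and g_b(x) := ½·φ(x)·φ(B·v), and set γ(b) := (∫ f·g_b dp) / (√(∫ f² dp) · √(∫ g_b² dp)). Then for every b with b₁·a₁²μ₁² + b₂·a₂²μ₂² ≠ 0, γ(b) = sign(b₁·a₁²μ₁² + b₂·a₂²μ₂²). -/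
open MeasureTheory RealInnerProductSpace
open scoped ENNReal

/-- **Alignment of the linear-kernel prediction under availability rescaling.**
With `v = (a₁μ₁, a₂μ₂) ≠ 0`, `p = ½·δ_v + ½·δ_{-v}`, `φ(x) = ⟨v,x⟩/‖v‖²`,
`f(x) = ½φ(x)φ(v)`, `g_b(x) = ½φ(x)φ(B·v)` with `B·v = (b₁a₁μ₁, b₂a₂μ₂)`, the
normalized alignment satisfies `γ(b) = sign(b₁a₁²μ₁² + b₂a₂²μ₂²)` whenever
that quantity is nonzero. -/
theorem linear_kernel_alignment_sign
    (a₁ a₂ μ₁ μ₂ : ℝ) (ha₁ : 0 < a₁) (ha₂ : 0 < a₂)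
    (v : EuclideanSpace ℝ (Fin 2))
    (hv : v = (WithLp.equiv 2 (Fin 2 → ℝ)).symm ![a₁ * μ₁, a₂ * μ₂])
    (hvne : v ≠ 0)
    (p : Measure (EuclideanSpace ℝ (Fin 2)))
    (hp : p = (1/2 : ℝ≥0∞) • Measure.dirac v + (1/2 : ℝ≥0∞) • Measure.dirac (-v))
    (φ : EuclideanSpace ℝ (Fin 2) → ℝ)
    (hφ : ∀ x, φ x = ⟪v, x⟫ / ‖v‖ ^ 2)
    (f : EuclideanSpace ℝ (Fin 2) → ℝ)
    (hf : ∀ x, f x = (1/2) * φ x * φ v)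
    (g : ℝ × ℝ → EuclideanSpace ℝ (Fin 2) → ℝ)
    (hg : ∀ b x, g b x = (1/2) * φ x *
      φ ((WithLp.equiv 2 (Fin 2 → ℝ)).symm ![b.1 * (a₁ * μ₁), b.2 * (a₂ * μ₂)]))
    (γ : ℝ × ℝ → ℝ)
    (hγ : ∀ b, γ b = (∫ x, f x * g b x ∂p) /
      (Real.sqrt (∫ x, (f x) ^ 2 ∂p) * Real.sqrt (∫ x, (g b x) ^ 2 ∂p))) :
    ∀ b : ℝ × ℝ, b.1 * a₁ ^ 2 * μ₁ ^ 2 + b.2 * a₂ ^ 2 * μ₂ ^ 2 ≠ 0 →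
      γ b = Real.sign (b.1 * a₁ ^ 2 * μ₁ ^ 2 + b.2 * a₂ ^ 2 * μ₂ ^ 2) := by
  intro b hb
  have hn : 0 < ‖v‖ ^ 2 := by positivity
  have h1 : φ v = 1 := by
    rw [hφ, real_inner_self_eq_norm_sq, div_self hn.ne']
  have h2 : φ (-v) = -1 := by
    rw [hφ, inner_neg_right, real_inner_self_eq_norm_sq, neg_div, div_self hn.ne']
  have hint : ∀ h : EuclideanSpace ℝ (Fin 2) → ℝ,
      ∫ x, h x ∂p = (1/2) * h v + (1/2) * h (-v) := by
    intro h
    have hi : ∀ w, Integrable h ((1/2 : ℝ≥0∞) • Measure.dirac w) := by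
      intro w
      apply Integrable.smul_measure _ (by simp)
      exact integrable_dirac (by simp)
    rw [hp, integral_add_measure (hi _) (hi _), integral_smul_measure, integral_smul_measure,
      integral_dirac, integral_dirac]
    simp
  set S := b.1 * a₁ ^ 2 * μ₁ ^ 2 + b.2 * a₂ ^ 2 * μ₂ ^ 2 with hS
  have hc : φ ((WithLp.equiv 2 (Fin 2 → ℝ)).symm ![b.1 * (a₁ * μ₁), b.2 * (a₂ * μ₂)])
      = S / ‖v‖ ^ 2 := by
    rw [hφ]
    congr 1
    rw [hv, hS]
    simp [PiLp.inner_apply, Fin.sum_univ_two]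
    ring
  set c := S / ‖v‖ ^ 2 with hcdef
  have e1 : ∫ x, f x * g b x ∂p = c / 4 := by
    rw [hint]
    simp only [hf, hg, hc, h1, h2]
    ring
  have e2 : ∫ x, (f x) ^ 2 ∂p = (1 / 2) ^ 2 := by
    rw [hint]
    simp only [hf, h1, h2]
    ring
  have e3 : ∫ x, (g b x) ^ 2 ∂p = (c / 2) ^ 2 := by
    rw [hint]
    simp only [hg, hc, h1, h2]
    ring
  rw [hγ, e1, e2, e3, Real.sqrt_sq_eq_abs, Real.sqrt_sq_eq_abs]
  rcases lt_or_gt_of_ne hb with h | h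
  · have hc0 : c < 0 := div_neg_of_neg_of_pos h hn
    rw [Real.sign_of_neg h, abs_of_neg (by linarith : c / 2 < 0), abs_of_pos (by norm_num)]
    have := hc0.ne
    clear_value c
    field_simp
    norm_num
  · have hc0 : 0 < c := div_pos h hn
    rw [Real.sign_of_pos h, abs_of_pos (by linarith : 0 < c / 2), abs_of_pos (by norm_num)]
    have := hc0.ne'
    clear_value c
    field_simp
    norm_num
end

section
/- Let v = (a₁μ₁, a₂μ₂) ∈ ℝ² with v ≠ 0 and p = ½·δ_v + ½·δ_{−v}. Define φ(x) := ⟨v, x⟩/‖v‖², f(x) := ½·φ(x)·φ(v), for b = (b₁, b₂) ∈ ℝ² let g_b(x) := ½·φ(x)·φ((b₁a₁μ₁, b₂a₂μ₂)), and γ(b) := (∫ f·g_b dp) / (√(∫ f² dp) · √(∫ g_b² dp)). Then for every integer m ≥ 1 and each i ∈ {1, 2}, the m-th partial derivative ζᵢ := (∂ᵐ/∂bᵢᵐ) γ evaluated at b = (1, 1) equals 0; in particular |ζ₁| − |ζ₂| = 0 for every m ≥ 1 and all choices of a₁, a₂. (A wide linear two-layer network is unbiased to feature availability.) -/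
open MeasureTheory RealInnerProductSpace
open scoped ENNReal

/-- **Linear networks are unbiased to feature availability.** With the
linear-kernel prediction function `f`, its availability-rescaled version
`g_b`, and the normalized alignment `γ`, every sensitivity
`ζᵢ = (∂ᵐ/∂bᵢᵐ) γ |_{b=(1,1)}` vanishes for all `m ≥ 1`; in particular
`|ζ₁| − |ζ₂| = 0` for every `m ≥ 1`. -/
theorem linear_kernel_unbiased_sensitivity
    (a₁ a₂ μ₁ μ₂ : ℝ) (ha₁ : 0 < a₁) (ha₂ : 0 < a₂)
    (v : EuclideanSpace ℝ (Fin 2))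
    (hv : v = (WithLp.equiv 2 (Fin 2 → ℝ)).symm ![a₁ * μ₁, a₂ * μ₂])
    (hvne : v ≠ 0)
    (p : Measure (EuclideanSpace ℝ (Fin 2)))
    (hp : p = (1/2 : ℝ≥0∞) • Measure.dirac v + (1/2 : ℝ≥0∞) • Measure.dirac (-v))
    (φ : EuclideanSpace ℝ (Fin 2) → ℝ)
    (hφ : ∀ x, φ x = ⟪v, x⟫ / ‖v‖ ^ 2)
    (f : EuclideanSpace ℝ (Fin 2) → ℝ)
    (hf : ∀ x, f x = (1/2) * φ x * φ v)
    (g : ℝ → ℝ → EuclideanSpace ℝ (Fin 2) → ℝ)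
    (hg : ∀ b₁ b₂ x, g b₁ b₂ x = (1/2) * φ x *
      φ ((WithLp.equiv 2 (Fin 2 → ℝ)).symm ![b₁ * (a₁ * μ₁), b₂ * (a₂ * μ₂)]))
    (γ : ℝ → ℝ → ℝ)
    (hγ : ∀ b₁ b₂, γ b₁ b₂ = (∫ x, f x * g b₁ b₂ x ∂p) /
      (Real.sqrt (∫ x, (f x) ^ 2 ∂p) * Real.sqrt (∫ x, (g b₁ b₂ x) ^ 2 ∂p))) :
    ∀ m : ℕ, 1 ≤ m →
      iteratedDeriv m (fun t => γ t 1) 1 = 0 ∧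
      iteratedDeriv m (fun t => γ 1 t) 1 = 0 ∧
      |iteratedDeriv m (fun t => γ t 1) 1| -
        |iteratedDeriv m (fun t => γ 1 t) 1| = 0 := by
  have hint : ∀ F : EuclideanSpace ℝ (Fin 2) → ℝ, ∫ x, F x ∂p = (F v + F (-v)) / 2 := by
    intro F
    have h1 : ∀ w : EuclideanSpace ℝ (Fin 2),
        Integrable F ((1/2 : ℝ≥0∞) • Measure.dirac w) := fun w =>
      (integrable_dirac (by simp)).smul_measure (by simp)
    rw [hp, integral_add_measure (h1 _) (h1 _), integral_smul_measure, integral_smul_measure,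
      integral_dirac, integral_dirac]
    simp
    ring
  have hn : ‖v‖ ^ 2 ≠ 0 := pow_ne_zero _ (norm_ne_zero_iff.mpr hvne)
  have hφv : φ v = 1 := by
    rw [hφ, real_inner_self_eq_norm_sq, div_self hn]
  have hφn : φ (-v) = -1 := by
    rw [hφ, inner_neg_right, real_inner_self_eq_norm_sq, neg_div, div_self hn]
  obtain ⟨c, hc⟩ : ∃ c : ℝ → ℝ → ℝ, ∀ b₁ b₂, c b₁ b₂ =
      φ ((WithLp.equiv 2 (Fin 2 → ℝ)).symm ![b₁ * (a₁ * μ₁), b₂ * (a₂ * μ₂)]) :=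
    ⟨_, fun _ _ => rfl⟩
  have hc1 : c 1 1 = 1 := by
    rw [hc, one_mul, one_mul, ← hv, hφv]
  have hcf : ∀ b₁ b₂, c b₁ b₂ =
      (b₁ * (a₁ * μ₁) * (a₁ * μ₁) + b₂ * (a₂ * μ₂) * (a₂ * μ₂)) / ‖v‖ ^ 2 := by
    intro b₁ b₂
    rw [hc, hφ]
    congr 1
    rw [hv]
    simp [PiLp.inner_apply, Fin.sum_univ_two]
  have hγ1 : ∀ b₁ b₂, 0 < c b₁ b₂ → γ b₁ b₂ = 1 := by
    intro b₁ b₂ h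
    rw [hγ, hint, hint, hint]
    simp only [hf, hg, ← hc, hφv, hφn]
    have e1 : ((1 / 2 * 1 * 1 : ℝ) ^ 2 + (1 / 2 * -1 * 1) ^ 2) / 2 = (1/2) ^ 2 := by norm_num
    have e2 : ((1 / 2 * 1 * c b₁ b₂ : ℝ) ^ 2 + (1 / 2 * -1 * c b₁ b₂) ^ 2) / 2
        = (c b₁ b₂ / 2) ^ 2 := by ring
    rw [e1, e2, Real.sqrt_sq (by norm_num), Real.sqrt_sq (by positivity)]
    field_simp
    norm_num
  have key : ∀ F : ℝ → ℝ, F =ᶠ[nhds 1] (fun _ => (1 : ℝ)) → ∀ m : ℕ, 1 ≤ m →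
      iteratedDeriv m F 1 = 0 := by
    intro F hF m hm
    rw [hF.iteratedDeriv_eq m, iteratedDeriv_const]
    simp; omega
  intro m hm
  have k1 : iteratedDeriv m (fun t => γ t 1) 1 = 0 := by
    refine key _ ?_ m hm
    have hcont : Continuous fun t => c t 1 := by
      simp only [hcf]; fun_prop
    filter_upwards [hcont.continuousAt.eventually (lt_mem_nhds (show 0 < c 1 1 by rw [hc1]; exact one_pos))]
      with t ht using hγ1 _ _ ht
  have k2 : iteratedDeriv m (fun t => γ 1 t) 1 = 0 := by
    refine key _ ?_ m hm
    have hcont : Continuous fun t => c 1 t := by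
      simp only [hcf]; fun_prop
    filter_upwards [hcont.continuousAt.eventually (lt_mem_nhds (show 0 < c 1 1 by rw [hc1]; exact one_pos))]
      with t ht using hγ1 _ _ ht
  exact ⟨k1, k2, by rw [k1, k2]; simp⟩
end

section
/- Let v = (a₁μ₁, a₂μ₂) ∈ ℝ² with a₁μ₁ ≠ 0 and a₂μ₂ ≠ 0, let p = ½·δ_v + ½·δ_{−v}, and let γ(b₁, b₂) be the normalized alignment between the approximate-ReLU-kernel prediction function f and its availability-rescaled version g_b. For an integer m ≥ 1 and i ∈ {1, 2}, let ζᵢ := (∂ᵐ/∂bᵢᵐ) γ evaluated at b = (1, 1). Then for every m with 1 ≤ m ≤ 8, |ζ₁| − |ζ₂| = 0. -/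
open MeasureTheory RealInnerProductSpace
open scoped ENNReal

/-- Derivatives at `1` of `1 + (t-1)^8 L(t)` up to order eight. -/
theorem aux_iteratedDeriv (F L : ℝ → ℝ) (hL : ContDiffAt ℝ 8 L 1)
    (hF : F =ᶠ[nhds 1] fun t => 1 + (t - 1) ^ 8 * L t) (m : ℕ) (h1 : 1 ≤ m) (h8 : m ≤ 8) :
    iteratedDeriv m F 1 = if m = 8 then (Nat.factorial 8 : ℝ) * L 1 else 0 := by
  have hLm : ContDiffAt ℝ m L 1 := hL.of_le (by exact_mod_cast h8)
  have hpow : ContDiffAt ℝ m (fun t : ℝ => (t - 1) ^ 8) 1 := by fun_prop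
  have hd : ∀ i, iteratedDeriv i (fun t : ℝ => (t - 1) ^ 8) 1
      = (Nat.descFactorial 8 i : ℝ) * (0 : ℝ) ^ (8 - i) := by
    intro i
    rw [iteratedDeriv_comp_sub_const i (fun t : ℝ => t ^ 8) 1]
    simp
  rw [hF.iteratedDeriv_eq, iteratedDeriv_const_add (by omega)]
  rw [iteratedDeriv_fun_mul hpow hLm]
  rw [Finset.sum_eq_single m]
  · rw [hd]
    split_ifs with h
    · subst h
      simp
      norm_num [Nat.descFactorial, Nat.factorial]
    · have : 8 - m ≠ 0 := by omega
      simp [this]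
  · intro i hi him
    rw [hd]
    have : 8 - i ≠ 0 := by
      have := Finset.mem_range.1 hi
      omega
    simp [this]
  · intro h
    simp at h

/-- The cosine of the angle. -/
noncomputable def auxC (X Y t : ℝ) : ℝ := (t * X + Y) / (√(t ^ 2 * X + Y) * √(X + Y))

/-- Half-angle tangent squared divided by `(t-1)^2`. -/
noncomputable def auxK (X Y t : ℝ) : ℝ :=
  X * Y / ((t ^ 2 * X + Y) * (X + Y) * (1 + auxC X Y t) ^ 2)

/-- The remainder factor. -/
noncomputable def auxL (X Y t : ℝ) : ℝ :=
  -(auxK X Y t) ^ 4 / (√(1 + ((t - 1) ^ 2 * auxK X Y t) ^ 4)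
    * (1 + √(1 + ((t - 1) ^ 2 * auxK X Y t) ^ 4)))

theorem auxC_pos {X Y t : ℝ} (hX : 0 < X) (hY : 0 < Y) (ht : 0 < t) : 0 < auxC X Y t := by
  unfold auxC; positivity

theorem auxC_contDiffAt {X Y : ℝ} (hX : 0 < X) (hY : 0 < Y) : ContDiffAt ℝ 8 (auxC X Y) 1 := by
  unfold auxC
  refine ContDiffAt.div (by fun_prop) (ContDiffAt.mul (ContDiffAt.sqrt (by fun_prop) ?_)
    contDiffAt_const) ?_ <;> positivity

theorem auxK_contDiffAt {X Y : ℝ} (hX : 0 < X) (hY : 0 < Y) : ContDiffAt ℝ 8 (auxK X Y) 1 := by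
  have h := auxC_contDiffAt hX hY
  have hc := auxC_pos hX hY one_pos
  unfold auxK
  refine ContDiffAt.div (by fun_prop) (by fun_prop) ?_
  positivity

theorem auxL_contDiffAt {X Y : ℝ} (hX : 0 < X) (hY : 0 < Y) : ContDiffAt ℝ 8 (auxL X Y) 1 := by
  have h := auxK_contDiffAt hX hY
  have hs : ContDiffAt ℝ 8 (fun t => √(1 + ((t - 1) ^ 2 * auxK X Y t) ^ 4)) 1 := by
    refine ContDiffAt.sqrt (by fun_prop) ?_
    positivity
  unfold auxL
  refine ContDiffAt.div (by fun_prop) (hs.mul (contDiffAt_const.add hs)) ?_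
  positivity

theorem auxL_symm (X Y : ℝ) : auxL X Y 1 = auxL Y X 1 := by
  have hc : auxC X Y 1 = auxC Y X 1 := by
    simp [auxC, add_comm]
  have hk : auxK X Y 1 = auxK Y X 1 := by
    simp [auxK, hc, add_comm, mul_comm]
  simp [auxL, hk]

theorem auxK_eq {X Y t : ℝ} (hX : 0 < X) (hY : 0 < Y) (ht : 0 < t) :
    (1 - auxC X Y t) / (1 + auxC X Y t) = (t - 1) ^ 2 * auxK X Y t := by
  have hc := auxC_pos hX hY ht
  have hsq : auxC X Y t ^ 2 * ((t ^ 2 * X + Y) * (X + Y)) = (t * X + Y) ^ 2 := by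
    unfold auxC
    rw [div_pow, mul_pow, Real.sq_sqrt (by positivity), Real.sq_sqrt (by positivity)]
    field_simp
  unfold auxK
  generalize auxC X Y t = c at *
  have h1 : (t ^ 2 * X + Y) ≠ 0 := by positivity
  have h2 : X + Y ≠ 0 := by positivity
  have h3 : 1 + c ≠ 0 := by positivity
  rw [← mul_div_assoc, div_eq_div_iff h3 (by positivity)]
  linear_combination -(1 + c) * hsq

theorem aux_expand {X Y t : ℝ} (hX : 0 < X) (hY : 0 < Y) (ht : 0 < t) :
    1 / √(1 + ((1 - auxC X Y t) / (1 + auxC X Y t)) ^ 4) = 1 + (t - 1) ^ 8 * auxL X Y t := by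
  rw [auxK_eq hX hY ht]
  unfold auxL
  generalize auxK X Y t = k
  have hp : 0 < 1 + ((t - 1) ^ 2 * k) ^ 4 := by positivity
  have hs : √(1 + ((t - 1) ^ 2 * k) ^ 4) ^ 2 = 1 + ((t - 1) ^ 2 * k) ^ 4 := Real.sq_sqrt hp.le
  have hs0 := Real.sqrt_pos.2 hp
  generalize √(1 + ((t - 1) ^ 2 * k) ^ 4) = s at *
  have h1 : 1 + s ≠ 0 := by positivity
  field_simp
  linear_combination -hs

theorem aux_alg {R c : ℝ} (hR : 0 < R) (hc : 0 < c) :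
    ((R / 2 * (1 + c ^ 2) + R * c) / 4) /
      (√(1 / 2) * √(((R / 2 * (1 + c ^ 2)) ^ 2 + (R * c) ^ 2) / 4)) =
    1 / √(1 + ((1 - c) / (1 + c)) ^ 4) := by
  have hP : 0 < (R / 2 * (1 + c ^ 2) + R * c) / 4 := by positivity
  have h : 1 + ((1 - c) / (1 + c)) ^ 4 =
      (1 / 2 * (((R / 2 * (1 + c ^ 2)) ^ 2 + (R * c) ^ 2) / 4)) /
        ((R / 2 * (1 + c ^ 2) + R * c) / 4) ^ 2 := by
    have e : (R / 2 * (1 + c ^ 2) + R * c) = R / 2 * (1 + c) ^ 2 := by ring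
    rw [e]
    have : 1 + c ≠ 0 := by positivity
    field_simp
    ring
  rw [h, ← Real.sqrt_mul (by positivity), Real.sqrt_div (by positivity), Real.sqrt_sq hP.le,
    one_div_div]

/-- **ReLU sensitivities agree up to order 8.** For the normalized alignment
`γ` between the approximate-ReLU-kernel prediction function `f` and its
availability-rescaled version `g_b`, the order-`m` sensitivities
`ζᵢ = (∂ᵐ/∂bᵢᵐ) γ |_{b=(1,1)}` satisfy `|ζ₁| − |ζ₂| = 0` for every
`1 ≤ m ≤ 8`. -/
theorem relu_kernel_sensitivities_equal_up_to_eight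
    (a₁ a₂ μ₁ μ₂ : ℝ) (ha₁ : 0 < a₁) (ha₂ : 0 < a₂)
    (hm₁ : a₁ * μ₁ ≠ 0) (hm₂ : a₂ * μ₂ ≠ 0)
    (v : EuclideanSpace ℝ (Fin 2))
    (hv : v = (WithLp.equiv 2 (Fin 2 → ℝ)).symm ![a₁ * μ₁, a₂ * μ₂])
    (p : Measure (EuclideanSpace ℝ (Fin 2)))
    (hp : p = (1/2 : ℝ≥0∞) • Measure.dirac v + (1/2 : ℝ≥0∞) • Measure.dirac (-v))
    (φ₁ φ₂ : EuclideanSpace ℝ (Fin 2) → ℝ)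
    (hφ₁ : ∀ x, φ₁ x = (‖x‖ / (2 * ‖v‖)) * (1 + ⟪‖x‖⁻¹ • x, ‖v‖⁻¹ • v⟫ ^ 2))
    (hφ₂ : ∀ x, φ₂ x = ⟪x, v⟫ / ‖v‖ ^ 2)
    (f : EuclideanSpace ℝ (Fin 2) → ℝ)
    (hf : ∀ x, f x = (1/2) * (φ₁ x * φ₁ v + φ₂ x * φ₂ v))
    (g : ℝ → ℝ → EuclideanSpace ℝ (Fin 2) → ℝ)
    (hg : ∀ b₁ b₂ x, g b₁ b₂ x = (1/2) *
      (φ₁ x * φ₁ ((WithLp.equiv 2 (Fin 2 → ℝ)).symm ![b₁ * (a₁ * μ₁), b₂ * (a₂ * μ₂)]) +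
       φ₂ x * φ₂ ((WithLp.equiv 2 (Fin 2 → ℝ)).symm ![b₁ * (a₁ * μ₁), b₂ * (a₂ * μ₂)])))
    (γ : ℝ → ℝ → ℝ)
    (hγ : ∀ b₁ b₂, γ b₁ b₂ = (∫ x, f x * g b₁ b₂ x ∂p) /
      (Real.sqrt (∫ x, (f x) ^ 2 ∂p) * Real.sqrt (∫ x, (g b₁ b₂ x) ^ 2 ∂p))) :
    ∀ m : ℕ, 1 ≤ m → m ≤ 8 →
      |iteratedDeriv m (fun t => γ t 1) 1| -
        |iteratedDeriv m (fun t => γ 1 t) 1| = 0 := by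
  set x := a₁ * μ₁ with hx
  set y := a₂ * μ₂ with hy
  have hX : 0 < x ^ 2 := by positivity
  have hY : 0 < y ^ 2 := by positivity
  have hnv2 : ‖v‖ ^ 2 = x ^ 2 + y ^ 2 := by
    rw [hv, EuclideanSpace.norm_sq_eq]; simp
  have hnv : ‖v‖ = √(x ^ 2 + y ^ 2) := by rw [← hnv2, Real.sqrt_sq (norm_nonneg _)]
  have hnvpos : 0 < ‖v‖ := by rw [hnv]; positivity
  have hvv : ⟪v, v⟫ = ‖v‖ ^ 2 := real_inner_self_eq_norm_sq v
  have hp1v : φ₁ v = 1 := by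
    rw [hφ₁, real_inner_smul_left, real_inner_smul_right, hvv]
    field_simp
    norm_num
  have hp1n : φ₁ (-v) = 1 := by
    rw [hφ₁, real_inner_smul_left, real_inner_smul_right, inner_neg_left, hvv, norm_neg]
    field_simp
    norm_num
  have hp2v : φ₂ v = 1 := by
    rw [hφ₂, hvv]; field_simp
  have hp2n : φ₂ (-v) = -1 := by
    rw [hφ₂, inner_neg_left, hvv]; field_simp
  have hint : ∀ F : EuclideanSpace ℝ (Fin 2) → ℝ, ∫ z, F z ∂p = (F v + F (-v)) / 2 := by
    intro F
    have hi : ∀ z, Integrable F ((1/2 : ℝ≥0∞) • Measure.dirac z) := fun z =>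
      (integrable_dirac (by simp)).smul_measure (by simp)
    rw [hp, integral_add_measure (hi _) (hi _), integral_smul_measure, integral_smul_measure,
      integral_dirac, integral_dirac]
    simp
    ring
  have hmain : ∀ b₁ b₂ : ℝ, 0 < b₁ → 0 < b₂ → γ b₁ b₂ =
      1 / √(1 + ((1 - (b₁ * x ^ 2 + b₂ * y ^ 2) /
          (√(b₁ ^ 2 * x ^ 2 + b₂ ^ 2 * y ^ 2) * √(x ^ 2 + y ^ 2))) /
        (1 + (b₁ * x ^ 2 + b₂ * y ^ 2) /
          (√(b₁ ^ 2 * x ^ 2 + b₂ ^ 2 * y ^ 2) * √(x ^ 2 + y ^ 2)))) ^ 4) := by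
    intro b₁ b₂ hb₁ hb₂
    have hg' := hg b₁ b₂
    set w : EuclideanSpace ℝ (Fin 2) :=
      (WithLp.equiv 2 (Fin 2 → ℝ)).symm ![b₁ * x, b₂ * y] with hw
    have hnw : ‖w‖ = √(b₁ ^ 2 * x ^ 2 + b₂ ^ 2 * y ^ 2) := by
      rw [hw, EuclideanSpace.norm_eq]; simp [mul_pow]
    have hnwpos : 0 < ‖w‖ := by rw [hnw]; positivity
    have hwv : ⟪w, v⟫ = b₁ * x ^ 2 + b₂ * y ^ 2 := by
      rw [hw, hv]; simp [PiLp.inner_apply]; ring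
    have hA : φ₁ w = (‖w‖ / ‖v‖) / 2 * (1 + (⟪w, v⟫ / (‖w‖ * ‖v‖)) ^ 2) := by
      rw [hφ₁, real_inner_smul_left, real_inner_smul_right]
      field_simp
    have hB : φ₂ w = (‖w‖ / ‖v‖) * (⟪w, v⟫ / (‖w‖ * ‖v‖)) := by
      rw [hφ₂]
      field_simp
    have hcpos : 0 < ⟪w, v⟫ / (‖w‖ * ‖v‖) := by
      rw [hwv]; positivity
    rw [← hwv, ← hnw, ← hnv, ← aux_alg (R := ‖w‖ / ‖v‖) (by positivity) hcpos, ← hA, ← hB,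
      hγ, hint, hint, hint]
    simp only [hf, hg', hp1v, hp1n, hp2v, hp2n]
    congr 1
    · ring
    · congr 2
      · norm_num
      · ring
  have hpos : ∀ᶠ t : ℝ in nhds 1, 0 < t := lt_mem_nhds one_pos
  have e1 : (fun t => γ t 1) =ᶠ[nhds 1] fun t => 1 + (t - 1) ^ 8 * auxL (x ^ 2) (y ^ 2) t := by
    filter_upwards [hpos] with t ht
    rw [hmain t 1 ht one_pos, ← aux_expand hX hY ht]
    simp [auxC]
  have e2 : (fun t => γ 1 t) =ᶠ[nhds 1] fun t => 1 + (t - 1) ^ 8 * auxL (y ^ 2) (x ^ 2) t := by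
    filter_upwards [hpos] with t ht
    rw [hmain 1 t one_pos ht, ← aux_expand hY hX ht]
    simp [auxC, add_comm]
  intro m h1 h8
  rw [aux_iteratedDeriv _ _ (auxL_contDiffAt hX hY) e1 m h1 h8,
    aux_iteratedDeriv _ _ (auxL_contDiffAt hY hX) e2 m h1 h8, auxL_symm, sub_self]
end

section
/- Let v = (a₁μ₁, a₂μ₂) ∈ ℝ² with a₁μ₁ ≠ 0 and a₂μ₂ ≠ 0, let p = ½·δ_v + ½·δ_{−v}, and let γ(b₁, b₂) be the normalized alignment between the approximate-ReLU-kernel prediction function f and its availability-rescaled version g_b. For i ∈ {1, 2}, let ζᵢ := (∂⁹/∂bᵢ⁹) γ evaluated at b = (1, 1). Then |ζ₁| − |ζ₂| = (5670 / (a₁²μ₁² + a₂²μ₂²)⁹) · (a₁a₂μ₁μ₂)⁸ · (a₁²μ₁² − a₂²μ₂²); in particular the order-9 sensitivities are the first to differ, and they differ in magnitude whenever a₁²μ₁² ≠ a₂²μ₂². -/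
open MeasureTheory RealInnerProductSpace
open scoped ENNReal


/-- Ninth derivative of `1 + (t-1)^8 K(t)` at `1`. -/
theorem aux_iter (F K : ℝ → ℝ) (k : ℝ) (hK : ContDiffAt ℝ 9 K 1) (hk : HasDerivAt K k 1)
    (hF : F =ᶠ[nhds 1] fun t => 1 + (t - 1) ^ 8 * K t) :
    iteratedDeriv 9 F 1 = 362880 * k := by
  rw [hF.iteratedDeriv_eq]
  have h8 : ContDiffAt ℝ 9 (fun t : ℝ => (t - 1) ^ 8) 1 := by fun_prop
  have hc : ∀ i, iteratedDeriv i (fun t : ℝ => (t - 1) ^ 8) 1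
      = iteratedDeriv i (fun t : ℝ => t ^ 8) 0 := by
    intro i
    have := congrFun (iteratedDeriv_comp_sub_const i (fun t : ℝ => t ^ 8) 1) 1
    simpa using this
  rw [iteratedDeriv_const_add (by norm_num), iteratedDeriv_fun_mul h8 hK]
  simp only [hc, Finset.sum_range_succ, Finset.sum_range_zero]
  simp [iteratedDeriv_one, hk.deriv, Nat.choose, Nat.descFactorial]
  left; norm_num

/-- The analytic core. -/
theorem aux_core (A B : ℝ) (hA : A ≠ 0) (hB : B ≠ 0) (F : ℝ → ℝ)
    (hF : ∀ t, 0 < t → F t =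
      (Real.sqrt ((A ^ 2 + B ^ 2) * (t ^ 2 * A ^ 2 + B ^ 2)) + (t * A ^ 2 + B ^ 2)) ^ 2 /
      Real.sqrt ((Real.sqrt ((A ^ 2 + B ^ 2) * (t ^ 2 * A ^ 2 + B ^ 2)) + (t * A ^ 2 + B ^ 2)) ^ 4 +
       (Real.sqrt ((A ^ 2 + B ^ 2) * (t ^ 2 * A ^ 2 + B ^ 2)) - (t * A ^ 2 + B ^ 2)) ^ 4)) :
    iteratedDeriv 9 F 1 = 5670 * (A * B) ^ 8 * A ^ 2 / (A ^ 2 + B ^ 2) ^ 9 := by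
  have hA2 : 0 < A ^ 2 := by positivity
  have hB2 : 0 < B ^ 2 := by positivity
  have hS : 0 < A ^ 2 + B ^ 2 := by positivity
  obtain ⟨R, hR⟩ : ∃ R : ℝ → ℝ, R = fun t =>
    Real.sqrt ((A ^ 2 + B ^ 2) * (t ^ 2 * A ^ 2 + B ^ 2)) := ⟨_, rfl⟩
  obtain ⟨P, hP⟩ : ∃ P : ℝ → ℝ, P = fun t => R t + (t * A ^ 2 + B ^ 2) := ⟨_, rfl⟩
  obtain ⟨U, hU⟩ : ∃ U : ℝ → ℝ, U = fun t => (A * B / P t) ^ 8 := ⟨_, rfl⟩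
  obtain ⟨s, hs⟩ : ∃ s : ℝ → ℝ, s = fun t => Real.sqrt (1 + (t - 1) ^ 8 * U t) := ⟨_, rfl⟩
  obtain ⟨K, hK⟩ : ∃ K : ℝ → ℝ, K = fun t => -U t / (s t * (1 + s t)) := ⟨_, rfl⟩
  have hR1 : R 1 = A ^ 2 + B ^ 2 := by
    rw [hR]
    simp only [one_pow, one_mul]
    rw [← sq, Real.sqrt_sq hS.le]
  have hP1 : P 1 = 2 * (A ^ 2 + B ^ 2) := by
    rw [hP]; simp only [hR1]; ring
  have hs1 : s 1 = 1 := by rw [hs]; simp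
  have hne : (A ^ 2 + B ^ 2) * ((1:ℝ) ^ 2 * A ^ 2 + B ^ 2) ≠ 0 := by positivity
  have hP1' : P 1 ≠ 0 := by rw [hP1]; positivity
  have cR : ContDiffAt ℝ 9 R 1 := by
    rw [hR]; exact ContDiffAt.sqrt (by fun_prop) hne
  have cP : ContDiffAt ℝ 9 P 1 := by rw [hP]; fun_prop
  have cU : ContDiffAt ℝ 9 U 1 := by
    rw [hU]; exact (contDiffAt_const.div cP hP1').pow 8
  have cs : ContDiffAt ℝ 9 s 1 := by
    rw [hs]; exact ContDiffAt.sqrt (by fun_prop) (by simp)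
  have cK : ContDiffAt ℝ 9 K 1 := by
    rw [hK]; exact ContDiffAt.div (by fun_prop) (by fun_prop) (by rw [hs1]; norm_num)
  have dR : HasDerivAt R (A ^ 2) 1 := by
    have h : HasDerivAt (fun t : ℝ => (A ^ 2 + B ^ 2) * (t ^ 2 * A ^ 2 + B ^ 2))
        ((A ^ 2 + B ^ 2) * (2 * A ^ 2)) 1 := by
      have := ((((hasDerivAt_id (1:ℝ)).pow 2).mul_const (A ^ 2)).add_const (B ^ 2)).const_mul
        (A ^ 2 + B ^ 2)
      simpa using this
    have h2 := h.sqrt hne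
    have h3 : Real.sqrt ((A ^ 2 + B ^ 2) * ((1:ℝ) ^ 2 * A ^ 2 + B ^ 2)) = A ^ 2 + B ^ 2 := by
      simpa only [hR] using hR1
    rw [h3] at h2
    rw [hR]
    convert h2 using 1
    field_simp
  have dP : HasDerivAt P (2 * A ^ 2) 1 := by
    rw [hP]
    have := dR.add (((hasDerivAt_id (1:ℝ)).mul_const (A ^ 2)).add_const (B ^ 2))
    exact this.congr_deriv (by ring)
  have dU : HasDerivAt U (-(8 * (A * B) ^ 8 * (2 * A ^ 2) / (P 1) ^ 9)) 1 := by
    rw [hU]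
    have := ((hasDerivAt_const (1:ℝ) (A * B)).div dP hP1').pow 8
    refine this.congr_deriv ?_
    simp only [Pi.div_apply]
    norm_num [div_pow]
    field_simp
  have ds : HasDerivAt s 0 1 := by
    have h : HasDerivAt (fun t : ℝ => 1 + (t - 1) ^ 8 * U t) 0 1 := by
      have := ((((hasDerivAt_id (1:ℝ)).sub_const 1).pow 8).mul dU).const_add 1
      simpa using this
    have h2 := h.sqrt (by simp)
    rw [hs]; simpa using h2
  have dK : HasDerivAt K ((A * B) ^ 8 * A ^ 2 / (64 * (A ^ 2 + B ^ 2) ^ 9)) 1 := by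
    have := dU.neg.div (ds.mul (ds.const_add 1)) (by simp [hs1])
    rw [hK]
    refine this.congr_deriv ?_
    have hU1 : U 1 = (A * B / (2 * (A ^ 2 + B ^ 2))) ^ 8 := by rw [hU]; simp only [hP1]
    simp only [Pi.mul_apply, Pi.neg_apply, hs1, hP1, hU1]
    field_simp
    ring
  rw [aux_iter F K _ cK dK]
  · field_simp
    norm_num
  · filter_upwards [lt_mem_nhds (show (0:ℝ) < 1 by norm_num)] with t ht
    have hRsq : R t ^ 2 = (A ^ 2 + B ^ 2) * (t ^ 2 * A ^ 2 + B ^ 2) := by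
      rw [hR]; exact Real.sq_sqrt (by positivity)
    have hR0 : 0 ≤ R t := by rw [hR]; exact Real.sqrt_nonneg _
    have hPt : 0 < P t := by rw [hP]; positivity
    have hQ : R t - (t * A ^ 2 + B ^ 2) = (A * B * (t - 1)) ^ 2 / P t := by
      rw [eq_div_iff hPt.ne', hP]
      simp only
      linear_combination hRsq
    have hU0 : 0 ≤ U t := by rw [hU]; simp only; positivity
    have hpos : 0 < 1 + (t - 1) ^ 8 * U t := by positivity
    have hspos : 0 < s t := by rw [hs]; exact Real.sqrt_pos.2 hpos
    have hssq : s t ^ 2 = 1 + (t - 1) ^ 8 * U t := by rw [hs]; exact Real.sq_sqrt hpos.le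
    have e : F t = (P t) ^ 2 / Real.sqrt ((P t) ^ 4 + (R t - (t * A ^ 2 + B ^ 2)) ^ 4) := by
      rw [hF t ht, hP, hR]
    have e2 : Real.sqrt ((P t) ^ 4 + (R t - (t * A ^ 2 + B ^ 2)) ^ 4) = P t ^ 2 * s t := by
      rw [Real.sqrt_eq_iff_mul_self_eq (by positivity) (by positivity), hQ]
      have : P t ^ 2 * s t * (P t ^ 2 * s t) = P t ^ 4 * s t ^ 2 := by ring
      rw [this, hssq, hU]
      field_simp
    rw [e, e2, hK]
    simp only
    field_simp
    linear_combination (-1) * hssq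

/-- **Order-9 sensitivity gap of the approximate ReLU kernel.** For the
normalized alignment `γ` between the approximate-ReLU-kernel prediction
function `f` and its availability-rescaled version `g_b`, the order-9
sensitivities `ζᵢ = (∂⁹/∂bᵢ⁹) γ |_{b=(1,1)}` satisfy
`|ζ₁| − |ζ₂| = (5670/(a₁²μ₁² + a₂²μ₂²)⁹)(a₁a₂μ₁μ₂)⁸(a₁²μ₁² − a₂²μ₂²)`. -/
theorem relu_kernel_ninth_order_sensitivity_gap
    (a₁ a₂ μ₁ μ₂ : ℝ) (ha₁ : 0 < a₁) (ha₂ : 0 < a₂)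
    (hm₁ : a₁ * μ₁ ≠ 0) (hm₂ : a₂ * μ₂ ≠ 0)
    (v : EuclideanSpace ℝ (Fin 2))
    (hv : v = (WithLp.equiv 2 (Fin 2 → ℝ)).symm ![a₁ * μ₁, a₂ * μ₂])
    (p : Measure (EuclideanSpace ℝ (Fin 2)))
    (hp : p = (1/2 : ℝ≥0∞) • Measure.dirac v + (1/2 : ℝ≥0∞) • Measure.dirac (-v))
    (φ₁ φ₂ : EuclideanSpace ℝ (Fin 2) → ℝ)
    (hφ₁ : ∀ x, φ₁ x = (‖x‖ / (2 * ‖v‖)) * (1 + ⟪‖x‖⁻¹ • x, ‖v‖⁻¹ • v⟫ ^ 2))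
    (hφ₂ : ∀ x, φ₂ x = ⟪x, v⟫ / ‖v‖ ^ 2)
    (f : EuclideanSpace ℝ (Fin 2) → ℝ)
    (hf : ∀ x, f x = (1/2) * (φ₁ x * φ₁ v + φ₂ x * φ₂ v))
    (g : ℝ → ℝ → EuclideanSpace ℝ (Fin 2) → ℝ)
    (hg : ∀ b₁ b₂ x, g b₁ b₂ x = (1/2) *
      (φ₁ x * φ₁ ((WithLp.equiv 2 (Fin 2 → ℝ)).symm ![b₁ * (a₁ * μ₁), b₂ * (a₂ * μ₂)]) +
       φ₂ x * φ₂ ((WithLp.equiv 2 (Fin 2 → ℝ)).symm ![b₁ * (a₁ * μ₁), b₂ * (a₂ * μ₂)])))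
    (γ : ℝ → ℝ → ℝ)
    (hγ : ∀ b₁ b₂, γ b₁ b₂ = (∫ x, f x * g b₁ b₂ x ∂p) /
      (Real.sqrt (∫ x, (f x) ^ 2 ∂p) * Real.sqrt (∫ x, (g b₁ b₂ x) ^ 2 ∂p))) :
    |iteratedDeriv 9 (fun t => γ t 1) 1| - |iteratedDeriv 9 (fun t => γ 1 t) 1| =
      (5670 / (a₁ ^ 2 * μ₁ ^ 2 + a₂ ^ 2 * μ₂ ^ 2) ^ 9) *
        (a₁ * a₂ * μ₁ * μ₂) ^ 8 * (a₁ ^ 2 * μ₁ ^ 2 - a₂ ^ 2 * μ₂ ^ 2) := by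
  obtain ⟨A, hA⟩ : ∃ A, A = a₁ * μ₁ := ⟨_, rfl⟩
  obtain ⟨B, hB⟩ : ∃ B, B = a₂ * μ₂ := ⟨_, rfl⟩
  rw [← hA] at hm₁ hv hg
  rw [← hB] at hm₂ hv hg
  have hA2 : 0 < A ^ 2 := by positivity
  have hB2 : 0 < B ^ 2 := by positivity
  have hS : 0 < A ^ 2 + B ^ 2 := by positivity
  have hN : ‖v‖ = Real.sqrt (A ^ 2 + B ^ 2) := by
    rw [hv, EuclideanSpace.norm_eq]; simp [Fin.sum_univ_two]
  have hNpos : 0 < ‖v‖ := by rw [hN]; positivity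
  have hN2 : ‖v‖ ^ 2 = A ^ 2 + B ^ 2 := by rw [hN]; exact Real.sq_sqrt hS.le
  have h1v : φ₁ v = 1 := by
    rw [hφ₁, real_inner_smul_left, real_inner_smul_right, real_inner_self_eq_norm_sq]
    field_simp; norm_num
  have h1nv : φ₁ (-v) = 1 := by
    rw [hφ₁, norm_neg, real_inner_smul_left, real_inner_smul_right, inner_neg_left,
      real_inner_self_eq_norm_sq]
    field_simp; norm_num
  have h2v : φ₂ v = 1 := by
    rw [hφ₂, real_inner_self_eq_norm_sq]; field_simp
  have h2nv : φ₂ (-v) = -1 := by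
    rw [hφ₂, inner_neg_left, real_inner_self_eq_norm_sq]; field_simp
  have hint : ∀ F : EuclideanSpace ℝ (Fin 2) → ℝ, ∫ x, F x ∂p = (F v + F (-v)) / 2 := by
    intro F
    rw [hp, integral_add_measure, integral_smul_measure, integral_smul_measure,
      integral_dirac, integral_dirac]
    · simp; ring
    · exact (integrable_dirac (by simp)).smul_measure (by simp)
    · exact (integrable_dirac (by simp)).smul_measure (by simp)
  have key : ∀ b₁ b₂, 0 < b₁ → 0 < b₂ → γ b₁ b₂ =
      (Real.sqrt ((A ^ 2 + B ^ 2) * (b₁ ^ 2 * A ^ 2 + b₂ ^ 2 * B ^ 2))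
        + (b₁ * A ^ 2 + b₂ * B ^ 2)) ^ 2 /
      Real.sqrt ((Real.sqrt ((A ^ 2 + B ^ 2) * (b₁ ^ 2 * A ^ 2 + b₂ ^ 2 * B ^ 2))
        + (b₁ * A ^ 2 + b₂ * B ^ 2)) ^ 4 +
       (Real.sqrt ((A ^ 2 + B ^ 2) * (b₁ ^ 2 * A ^ 2 + b₂ ^ 2 * B ^ 2))
        - (b₁ * A ^ 2 + b₂ * B ^ 2)) ^ 4) := by
    intro b₁ b₂ hb₁ hb₂
    obtain ⟨w, hw⟩ : ∃ w : EuclideanSpace ℝ (Fin 2),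
      w = (WithLp.equiv 2 (Fin 2 → ℝ)).symm ![b₁ * A, b₂ * B] := ⟨_, rfl⟩
    have hn : ‖w‖ = Real.sqrt (b₁ ^ 2 * A ^ 2 + b₂ ^ 2 * B ^ 2) := by
      rw [hw, EuclideanSpace.norm_eq]; simp [Fin.sum_univ_two, mul_pow]
    have hnpos : 0 < ‖w‖ := by rw [hn]; positivity
    have hd : ⟪w, v⟫ = b₁ * A ^ 2 + b₂ * B ^ 2 := by
      rw [hw, hv, PiLp.inner_apply]; simp [Fin.sum_univ_two]; ring
    have hR : Real.sqrt ((A ^ 2 + B ^ 2) * (b₁ ^ 2 * A ^ 2 + b₂ ^ 2 * B ^ 2)) = ‖v‖ * ‖w‖ := by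
      rw [Real.sqrt_mul hS.le, hn, hN]
    rw [hR, ← hd]
    have hdpos : 0 < ⟪w, v⟫ := by rw [hd]; positivity
    have e1 : φ₁ w = (‖v‖ ^ 2 * ‖w‖ ^ 2 + ⟪w, v⟫ ^ 2) / (2 * ‖w‖ * ‖v‖ ^ 3) := by
      rw [hφ₁, real_inner_smul_left, real_inner_smul_right]
      field_simp
    have gv : g b₁ b₂ v = (‖v‖ * ‖w‖ + ⟪w, v⟫) ^ 2 * (1 / (4 * ‖w‖ * ‖v‖ ^ 3)) := by
      rw [hg, ← hw, h1v, h2v, e1, hφ₂]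
      field_simp; ring
    have gnv : g b₁ b₂ (-v) = (‖v‖ * ‖w‖ - ⟪w, v⟫) ^ 2 * (1 / (4 * ‖w‖ * ‖v‖ ^ 3)) := by
      rw [hg, ← hw, h1nv, h2nv, e1, hφ₂]
      field_simp; ring
    have fv : f v = 1 := by rw [hf, h1v, h2v]; norm_num
    have fnv : f (-v) = 0 := by rw [hf, h1v, h2v, h1nv, h2nv]; norm_num
    obtain ⟨c, hc⟩ : ∃ c, c = 1 / (4 * ‖w‖ * ‖v‖ ^ 3) := ⟨_, rfl⟩
    have hcpos : 0 < c := by rw [hc]; positivity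
    rw [hγ, hint, hint, hint, fv, fnv, gv, gnv, ← hc, ← Real.sqrt_mul (by norm_num)]
    have hX : 0 < (‖v‖ * ‖w‖ + ⟪w, v⟫) ^ 4 + (‖v‖ * ‖w‖ - ⟪w, v⟫) ^ 4 := by positivity
    have : ((1:ℝ) ^ 2 + 0 ^ 2) / 2 * ((((‖v‖ * ‖w‖ + ⟪w, v⟫) ^ 2 * c) ^ 2 +
        ((‖v‖ * ‖w‖ - ⟪w, v⟫) ^ 2 * c) ^ 2) / 2) =
        (c / 2) ^ 2 * ((‖v‖ * ‖w‖ + ⟪w, v⟫) ^ 4 + (‖v‖ * ‖w‖ - ⟪w, v⟫) ^ 4) := by ring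
    rw [this, Real.sqrt_mul (by positivity), Real.sqrt_sq (by positivity)]
    have hsq := Real.sqrt_pos.2 hX
    field_simp
    ring
  have z1 := aux_core A B hm₁ hm₂ (fun t => γ t 1) (by
    intro t ht
    simpa using key t 1 ht one_pos)
  have z2 := aux_core B A hm₂ hm₁ (fun t => γ 1 t) (by
    intro t ht
    have := key 1 t one_pos ht
    rw [add_comm (B ^ 2) (A ^ 2), add_comm (t ^ 2 * B ^ 2), add_comm (t * B ^ 2)]
    simpa using this)
  have e8 : (a₁ * a₂ * μ₁ * μ₂) ^ 8 = (A * B) ^ 8 := by rw [hA, hB]; ring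
  have eA : a₁ ^ 2 * μ₁ ^ 2 = A ^ 2 := by rw [hA]; ring
  have eB : a₂ ^ 2 * μ₂ ^ 2 = B ^ 2 := by rw [hB]; ring
  rw [z1, z2, abs_of_nonneg (by positivity), abs_of_nonneg (by positivity), e8, eA, eB,
    add_comm (B ^ 2) (A ^ 2)]
  field_simp
end
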